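/- Assume α > 1, both λ and β are nondecreasing on [t₀,∞), b(t) > β'(t) + β(t)/t (equivalently w(t) > 0) for every t ≥ t₀, there exists ε ∈ (0, α−1) with (α−3)·w(t) − t·w'(t) ≥ ε·b(t) for every t ≥ t₀, ∫_{t₀}^{∞} [ λ'(t)²·t³·β(t)²/λ(t)⁴ − λ'(t)·t²·b(t)/(2·λ(t)²) ]_+ dt < +∞ (where [·]_+ denotes the positive part), and there exists C > 0 with (d/dt)(t²·b(t)) ≤ C·t·b(t) for every t ≥ t₀. Then t·√(b(t)·λ(t))·‖∇Φ_{λ(t)}(x(t))‖ → 0 as t → +∞, i.e. ‖∇Φ_{λ(t)}(x(t))‖ = o(1/(t·√(b(t)·λ(t)))). -/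

import Mathlib

open Set MeasureTheory Filter Real

noncomputable section

/-- Convexity for extended-real-valued functions. -/
def EConvexOn {H : Type*} [NormedAddCommGroup H] [NormedSpace ℝ H] (f : H → EReal) : Prop :=
  ∀ x y : H, ∀ a c : ℝ, 0 ≤ a → 0 ≤ c → a + c = 1 →
    f (a • x + c • y) ≤ (a : EReal) * f x + (c : EReal) * f y

/-- `p` is the proximal point of `f` with parameter `l` at `x`, i.e. the (unique) minimizer of
`y ↦ f y + ‖x - y‖² / (2l)`. -/
def IsProxPt {H : Type*} [NormedAddCommGroup H] [InnerProductSpace ℝ H]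
    (f : H → EReal) (l : ℝ) (x p : H) : Prop :=
  ∀ y : H, f p + ((‖x - p‖ ^ 2 / (2 * l) : ℝ) : EReal)
      ≤ f y + ((‖x - y‖ ^ 2 / (2 * l) : ℝ) : EReal)

/-- The Moreau envelope of `f` with parameter `l` (as a real number). -/
def moreau {H : Type*} [NormedAddCommGroup H] [InnerProductSpace ℝ H]
    (f : H → EReal) (l : ℝ) (x : H) : ℝ :=
  (⨅ y : H, f y + ((‖x - y‖ ^ 2 / (2 * l) : ℝ) : EReal)).toReal

lemma aux_sandwich {f l u : ℝ → ℝ} {d t : ℝ} (hl : HasDerivAt l d t) (hu : HasDerivAt u d t)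
    (hl0 : l t = 0) (hu0 : u t = 0)
    (h : ∀ᶠ s in nhds t, l s ≤ f s - f t ∧ f s - f t ≤ u s) : HasDerivAt f d t := by
  rw [hasDerivAt_iff_isLittleO] at *
  rw [hl0] at hl
  rw [hu0] at hu
  have h2 := hl.norm_left.add hu.norm_left
  refine Asymptotics.IsBigO.trans_isLittleO ?_ h2
  · refine Asymptotics.IsBigO.of_bound 1 ?_
    filter_upwards [h] with s hs
    simp only [smul_eq_mul, Real.norm_eq_abs, sub_zero]
    rw [one_mul, abs_of_nonneg (a := |l s - (s - t) * d| + |u s - (s - t) * d|) (by positivity)]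
    obtain ⟨h1, h2⟩ := hs
    rw [abs_le]
    have a1 := neg_abs_le (l s - (s - t) * d)
    have a2 := le_abs_self (u s - (s - t) * d)
    have a3 := abs_nonneg (l s - (s - t) * d)
    have a4 := abs_nonneg (u s - (s - t) * d)
    constructor <;> linarith

section
variable {H : Type*} [NormedAddCommGroup H] [InnerProductSpace ℝ H]

lemma aux_finite {Φ : H → EReal} (hproper : ∃ y, Φ y ≠ ⊤) {l : ℝ} {x p : H}
    (hp : IsProxPt Φ l x p) : Φ p ≠ ⊤ := by
  obtain ⟨y, hy⟩ := hproper
  intro h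
  have := hp y
  rw [h, EReal.top_add_coe, top_le_iff] at this
  exact (EReal.add_lt_top hy (EReal.coe_ne_top _)).ne this

lemma aux_prox_real {Φ : H → EReal} (hbot : ∀ y, Φ y ≠ ⊥) {l : ℝ} {x p y : H}
    (hp : IsProxPt Φ l x p) (hpt : Φ p ≠ ⊤) (hy : Φ y ≠ ⊤) :
    (Φ p).toReal + ‖x - p‖ ^ 2 / (2 * l) ≤ (Φ y).toReal + ‖x - y‖ ^ 2 / (2 * l) := by
  have := hp y
  rw [← EReal.coe_toReal hpt (hbot p), ← EReal.coe_toReal hy (hbot y)] at this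
  exact_mod_cast this

lemma aux_subgrad {Φ : H → EReal} (hbot : ∀ y, Φ y ≠ ⊥) (hconv : EConvexOn Φ) {l : ℝ}
    (hl : 0 < l) {x p y : H}
    (hp : IsProxPt Φ l x p) (hpt : Φ p ≠ ⊤) (hy : Φ y ≠ ⊤) :
    (Φ p).toReal + inner ℝ (l⁻¹ • (x - p)) (y - p) ≤ (Φ y).toReal := by
  have key : ∀ a : ℝ, 0 < a → a < 1 →
      (Φ p).toReal + inner ℝ (l⁻¹ • (x - p)) (y - p) - (Φ y).toReal
        ≤ a * (‖y - p‖ ^ 2 / (2 * l)) := by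
    intro a ha ha1
    have hc := hconv p y (1 - a) a (by linarith) ha.le (by ring)
    have hc' : Φ ((1 - a) • p + a • y) ≤ (((1 - a) * (Φ p).toReal + a * (Φ y).toReal : ℝ) : EReal) := by
      rw [← EReal.coe_toReal hpt (hbot p), ← EReal.coe_toReal hy (hbot y)] at hc
      exact_mod_cast hc
    have hqt : Φ ((1 - a) • p + a • y) ≠ ⊤ := fun h => by
      rw [h, top_le_iff] at hc'
      exact EReal.coe_ne_top _ hc'
    have hcr : (Φ ((1 - a) • p + a • y)).toReal ≤ (1 - a) * (Φ p).toReal + a * (Φ y).toReal := by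
      rw [← EReal.coe_toReal hqt (hbot _)] at hc'
      exact_mod_cast hc'
    have h1 := aux_prox_real hbot hp hpt hqt
    have e : x - ((1 - a) • p + a • y) = (x - p) - a • (y - p) := by module
    rw [e, norm_sub_sq_real (x - p), norm_smul, mul_pow, Real.norm_eq_abs, sq_abs, inner_smul_right] at h1
    rw [inner_smul_left]
    simp only [conj_trivial]
    have h2 : (‖x - p‖ ^ 2 - 2 * (a * inner ℝ (x - p) (y - p)) + a ^ 2 * ‖y - p‖ ^ 2) / (2 * l)
       = ‖x - p‖ ^ 2 / (2 * l) - a * (l⁻¹ * inner ℝ (x - p) (y - p))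
          + a * (a * (‖y - p‖ ^ 2 / (2 * l))) := by
      field_simp
    rw [h2] at h1
    have h3 : a * ((Φ p).toReal + l⁻¹ * inner ℝ (x - p) (y - p) - (Φ y).toReal)
       ≤ a * (a * (‖y - p‖ ^ 2 / (2 * l))) := by linarith
    exact le_of_mul_le_mul_left h3 ha
  have lim : Tendsto (fun a : ℝ => a * (‖y - p‖ ^ 2 / (2 * l))) (nhdsWithin 0 (Ioi 0)) (nhds 0) := by
    have : Tendsto (fun a : ℝ => a * (‖y - p‖ ^ 2 / (2 * l))) (nhds 0)
        (nhds (0 * (‖y - p‖ ^ 2 / (2 * l)))) := (continuous_id.mul continuous_const).tendsto 0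
    rw [zero_mul] at this
    exact this.mono_left nhdsWithin_le_nhds
  have := ge_of_tendsto (b := (Φ p).toReal + inner ℝ (l⁻¹ • (x - p)) (y - p) - (Φ y).toReal) lim (by
    filter_upwards [Ioo_mem_nhdsGT (zero_lt_one (α := ℝ))] with a ha
    exact key a ha.1 ha.2)
  linarith

lemma aux_mono_deriv {G p : ℝ → H} {G' p' : H} {t : ℝ} (hG : HasDerivAt G G' t)
    (hp : HasDerivAt p p' t)
    (h : ∀ᶠ s in nhds t, 0 ≤ inner ℝ (G s - G t) (p s - p t)) : 0 ≤ inner ℝ G' p' := by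
  rw [hasDerivAt_iff_tendsto_slope] at hG hp
  refine ge_of_tendsto (hG.inner hp) ?_
  filter_upwards [h.filter_mono nhdsWithin_le_nhds] with s hs
  simp only [slope_def_module, inner_smul_left, inner_smul_right, conj_trivial]
  rw [← mul_assoc]
  exact mul_nonneg (mul_self_nonneg _) hs

/-- key bound on ⟨q, v⟩ -/
lemma aux_ball {q v G : H} {l l' : ℝ} (hl : 0 < l) (hl' : 0 ≤ l')
    (h : 0 ≤ inner ℝ q (v - l' • G - l • q)) :
    -(l' / l * ‖G‖ * ‖v‖) ≤ inner ℝ q v := by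
  set a := v - l' • G with ha
  have h1 : ‖(2 * l) • q - a‖ ≤ ‖a‖ := by
    apply le_of_sq_le_sq _ (norm_nonneg _)
    rw [norm_sub_sq_real, norm_smul, inner_smul_left, mul_pow, Real.norm_eq_abs, sq_abs]
    rw [inner_sub_right, inner_smul_right, real_inner_self_eq_norm_sq] at h
    simp only [conj_trivial]
    nlinarith
  have h2 : -(‖a‖ * ‖v‖) ≤ inner ℝ ((2 * l) • q - a) v := by
    have := neg_le_of_abs_le (abs_real_inner_le_norm ((2 * l) • q - a) v)
    have := mul_le_mul_of_nonneg_right h1 (norm_nonneg v)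
    linarith
  have h3 : ‖a‖ ≤ ‖v‖ + l' * ‖G‖ := by
    have := norm_sub_le v (l' • G)
    rwa [norm_smul, Real.norm_of_nonneg hl'] at this
  have h4 : inner ℝ a v = ‖v‖ ^ 2 - l' * inner ℝ G v := by
    rw [ha, inner_sub_left, inner_smul_left, real_inner_self_eq_norm_sq]; simp
  have h5 := real_inner_le_norm G v
  have h6 := mul_le_mul_of_nonneg_left h5 hl'
  have h7 := mul_le_mul_of_nonneg_right h3 (norm_nonneg v)
  rw [inner_sub_left, inner_smul_left, h4] at h2
  simp only [conj_trivial] at h2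
  have h8 : -(l' * ‖G‖ * ‖v‖) ≤ l * inner ℝ q v := by nlinarith
  have h9 : -(l' / l * ‖G‖ * ‖v‖) = (-(l' * ‖G‖ * ‖v‖)) / l := by field_simp
  rw [h9, div_le_iff₀ hl]
  linarith

lemma aux_moreau_deriv {x p G : ℝ → H} {P lam : ℝ → ℝ} {v G' : H} {l' t₀ t : ℝ} (ht : t₀ < t)
    (hlampos : ∀ s ≥ t₀, 0 < lam s)
    (hlam : HasDerivAt lam l' t) (hx : HasDerivAt x v t) (hG : HasDerivAt G G' t)
    (hGdef : ∀ s, G s = (lam s)⁻¹ • (x s - p s))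
    (hpd : HasDerivAt p (v - l' • G t - lam t • G') t)
    (hprox : ∀ s ≥ t₀, ∀ r ≥ t₀, P s + ‖x s - p s‖ ^ 2 / (2 * lam s)
      ≤ P r + ‖x s - p r‖ ^ 2 / (2 * lam s)) :
    HasDerivAt (fun s => P s + ‖x s - p s‖ ^ 2 / (2 * lam s))
      (inner ℝ (G t) v - l' / 2 * ‖G t‖ ^ 2) t := by
  have hlt := hlampos t ht.le
  have hxp : x t - p t = lam t • G t := by
    rw [hGdef, smul_smul, mul_inv_cancel₀ hlt.ne', one_smul]
  refine aux_sandwich (l := fun s => ‖x s - p s‖ ^ 2 / (2 * lam s) - ‖x t - p s‖ ^ 2 / (2 * lam t))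
    (u := fun s => ‖x s - p t‖ ^ 2 / (2 * lam s) - ‖x t - p t‖ ^ 2 / (2 * lam t)) ?_ ?_
    (by simp) (by simp) ?_
  · have h1 := ((hx.sub hpd).norm_sq.div (hlam.const_mul 2) (by positivity)).sub
      ((((hasDerivAt_const t (x t)).sub hpd).norm_sq).div_const (2 * lam t))
    refine h1.congr_deriv ?_
    simp only [Pi.sub_apply, hxp, inner_sub_right, inner_smul_left, inner_smul_right, conj_trivial, norm_smul,
      mul_pow, Real.norm_eq_abs, sq_abs, inner_zero_right, real_inner_self_eq_norm_sq]
    field_simp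
    ring
  · have h1 := ((hx.sub_const (p t)).norm_sq.div (hlam.const_mul 2) (by positivity)).sub_const
      (‖x t - p t‖ ^ 2 / (2 * lam t))
    refine h1.congr_deriv ?_
    simp only [hxp, inner_sub_right, inner_smul_left, inner_smul_right, conj_trivial, norm_smul,
      mul_pow, Real.norm_eq_abs, sq_abs, inner_zero_right, real_inner_self_eq_norm_sq]
    field_simp
    try ring
  · filter_upwards [lt_mem_nhds ht] with s hs
    have a1 := hprox s hs.le t ht.le
    have a2 := hprox t ht.le s hs.le
    constructor <;> linarith
end

lemma aux_deriv_nonneg {f : ℝ → ℝ} {d t₀ t : ℝ} (ht : t₀ < t) (hm : MonotoneOn f (Set.Ici t₀))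
    (hf : HasDerivAt f d t) : 0 ≤ d := by
  rw [hasDerivAt_iff_tendsto_slope] at hf
  refine ge_of_tendsto hf ?_
  filter_upwards [(lt_mem_nhds ht).filter_mono nhdsWithin_le_nhds] with s hs
  rw [slope_def_field]
  rcases le_total s t with h | h
  · exact div_nonneg_of_nonpos (by have := hm hs.le ht.le h; linarith) (by linarith)
  · exact div_nonneg (by have := hm ht.le hs.le h; linarith) (by linarith)

/-- abstract convergence argument -/
lemma aux_limit {E F E' F' φ : ℝ → ℝ} {t₁ δ K : ℝ} (ht₁ : 0 < t₁) (hδ : 0 < δ)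
    (hE0 : ∀ t ≥ t₁, 0 ≤ E t) (hF0 : ∀ t ≥ t₁, 0 ≤ F t) (hK : 0 ≤ K)
    (hE : ∀ t ≥ t₁, HasDerivAt E (E' t) t) (hF : ∀ t ≥ t₁, HasDerivAt F (F' t) t)
    (hEF : ∀ t ≥ t₁, E' t ≤ -(δ * (F t / t)))
    (hφ0 : ∀ t, 0 ≤ φ t)
    (hφ : IntegrableOn φ (Set.Ici t₁))
    (hFE : ∀ t ≥ t₁, F' t + K * E' t ≤ φ t) : Tendsto F atTop (nhds 0) := by
  have hEanti : AntitoneOn E (Set.Ici t₁) := by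
    apply antitoneOn_of_deriv_nonpos (convex_Ici t₁)
    · exact fun t ht => (hE t ht).continuousAt.continuousWithinAt
    · intro t ht
      rw [interior_Ici] at ht
      exact (hE t (le_of_lt ht)).differentiableAt.differentiableWithinAt
    · intro t ht
      rw [interior_Ici] at ht
      have ht' : t₁ ≤ t := le_of_lt ht
      rw [(hE t ht').deriv]
      have := hEF t ht'
      have h2 : 0 ≤ δ * (F t / t) := mul_nonneg hδ.le (div_nonneg (hF0 t ht') (by linarith))
      linarith
  have conv : ∀ g : ℝ → ℝ, AntitoneOn g (Set.Ici t₁) → ∀ B : ℝ, (∀ t ≥ t₁, B ≤ g t) →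
      ∃ ℓ, Tendsto g atTop (nhds ℓ) := by
    intro g hg B hB
    have h1 : Antitone (fun t => g (max t t₁)) := fun a c hac =>
      hg (mem_Ici.2 (le_max_right _ _)) (mem_Ici.2 (le_max_right _ _)) (max_le_max_right _ hac)
    refine ⟨_, (tendsto_atTop_ciInf h1 ⟨B, ?_⟩).congr' ?_⟩
    · rintro _ ⟨t, rfl⟩
      exact hB _ (le_max_right _ _)
    · filter_upwards [eventually_ge_atTop t₁] with t ht
      rw [max_eq_left ht]
  obtain ⟨e, he⟩ := conv E hEanti 0 hE0
  have hint : ∀ a c, t₁ ≤ a → a ≤ c → IntervalIntegrable φ volume a c := fun a c ha hac => by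
    rw [intervalIntegrable_iff_integrableOn_Icc_of_le hac]
    exact hφ.mono_set (fun y hy => ha.trans hy.1)
  set J : ℝ → ℝ := fun t => ∫ s in t₁..t, φ s with hJ
  have hJlim : Tendsto J atTop (nhds (∫ s in Set.Ioi t₁, φ s)) :=
    intervalIntegral_tendsto_integral_Ioi t₁ (hφ.mono_set Ioi_subset_Ici_self) tendsto_id
  have hJle : ∀ t ≥ t₁, J t ≤ ∫ s in Set.Ioi t₁, φ s := fun t ht => by
    rw [hJ]
    simp only
    rw [intervalIntegral.integral_of_le ht]
    exact setIntegral_mono_set (hφ.mono_set Ioi_subset_Ici_self) (ae_of_all _ hφ0)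
      (Ioc_subset_Ioi_self.eventuallyLE)
  obtain ⟨m, hm⟩ := conv (fun t => F t + K * E t - J t) (by
    intro a ha c hc hac
    have ha' : t₁ ≤ a := ha
    have h1 := intervalIntegral.sub_le_integral_of_hasDeriv_right_of_le (g := fun t => F t + K * E t)
      (g' := fun t => F' t + K * E' t) (φ := φ) hac
      (fun t ht => ((hF t (ha'.trans ht.1)).add ((hE t (ha'.trans ht.1)).const_mul K)).continuousAt.continuousWithinAt)
      (fun t ht => ((hF t (ha'.trans ht.1.le)).add ((hE t (ha'.trans ht.1.le)).const_mul K)).hasDerivWithinAt)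
      (hφ.mono_set (fun y hy => ha'.trans hy.1))
      (fun t ht => hFE t (ha'.trans ht.1.le))
    have h2 : J a + ∫ s in a..c, φ s = J c :=
      intervalIntegral.integral_add_adjacent_intervals (hint _ _ le_rfl ha) (hint _ _ ha hac)
    simp only at h1 ⊢
    linarith) (-(∫ s in Set.Ioi t₁, φ s)) (by
    intro t ht
    have := hJle t ht
    have := hF0 t ht
    have := mul_nonneg hK (hE0 t ht)
    linarith)
  have hFlim : ∃ ℓ, Tendsto F atTop (nhds ℓ) := by
    refine ⟨_, ((hm.add hJlim).sub (he.const_mul K)).congr ?_⟩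
    intro t; ring
  obtain ⟨ℓ, hℓ⟩ := hFlim
  have hℓ0 : 0 ≤ ℓ := ge_of_tendsto hℓ (by
    filter_upwards [eventually_ge_atTop t₁] with t ht using hF0 t ht)
  rcases hℓ0.eq_or_lt with h | h
  · rwa [← h] at hℓ
  exfalso
  have hev : ∀ᶠ t in atTop, ℓ / 2 ≤ F t :=
    hℓ.eventually_const_le (by linarith)
  obtain ⟨T, hT⟩ := (hev.and (eventually_ge_atTop t₁)).exists_forall_of_atTop
  have hT1 : t₁ ≤ T := (hT T le_rfl).2
  set κ := δ * (ℓ / 2) with hκ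
  have hκ0 : 0 < κ := by positivity
  have hanti : AntitoneOn (fun t => E t + κ * Real.log t) (Set.Ici T) := by
    have hd : ∀ t ≥ T, HasDerivAt (fun t => E t + κ * Real.log t) (E' t + κ * t⁻¹) t := fun t ht =>
      (hE t (hT t ht).2).add ((Real.hasDerivAt_log (by have := (hT t ht).2; linarith)).const_mul κ)
    apply antitoneOn_of_deriv_nonpos (convex_Ici T)
    · exact fun t ht => (hd t ht).continuousAt.continuousWithinAt
    · intro t ht
      rw [interior_Ici] at ht
      exact (hd t (le_of_lt ht)).differentiableAt.differentiableWithinAt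
    · intro t ht
      rw [interior_Ici] at ht
      have ht' : T ≤ t := le_of_lt ht
      rw [(hd t ht').deriv]
      have h1 := hEF t (hT t ht').2
      have htp : 0 < t := by linarith
      have h2 : κ * t⁻¹ ≤ δ * (F t / t) := by
        rw [hκ, mul_assoc, ← div_eq_mul_inv (ℓ / 2)]
        have := (hT t ht').1
        gcongr
      linarith
  have hlog : Tendsto (fun t => κ * Real.log t) atTop atTop :=
    Real.tendsto_log_atTop.const_mul_atTop hκ0
  obtain ⟨t, ht⟩ := ((hlog.eventually_gt_atTop (E T + κ * Real.log T)).and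
    (eventually_ge_atTop T)).exists
  have h1 := hanti (le_refl T) ht.2 ht.2
  have h2 := hE0 t (hT t ht.2).2
  simp only at h1
  linarith [ht.1]

set_option maxHeartbeats 4000000 in
theorem moreau_gradient_little_o
    {H : Type*} [NormedAddCommGroup H] [InnerProductSpace ℝ H] [CompleteSpace H]
    (Φ : H → EReal)
    (hΦbot : ∀ y, Φ y ≠ ⊥) (hΦproper : ∃ y, Φ y ≠ ⊤)
    (hΦconv : EConvexOn Φ) (hΦlsc : LowerSemicontinuous Φ)
    (t₀ α : ℝ) (ht₀ : 0 < t₀)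
    (β b lam β' b' lam' w' : ℝ → ℝ)
    (hβnonneg : ∀ t ≥ t₀, 0 ≤ β t)
    (hbpos : ∀ t ≥ t₀, 0 < b t)
    (hlampos : ∀ t ≥ t₀, 0 < lam t)
    (hβ' : ∀ t ≥ t₀, HasDerivAt β (β' t) t)
    (hb' : ∀ t ≥ t₀, HasDerivAt b (b' t) t)
    (hlam' : ∀ t ≥ t₀, HasDerivAt lam (lam' t) t)
    (hw' : ∀ t ≥ t₀, HasDerivAt (fun s => b s - β' s - β s / s) (w' t) t)
    (x v acc p G' : ℝ → H)
    (hx : ∀ t ≥ t₀, HasDerivAt x (v t) t)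
    (hv : ∀ t ≥ t₀, HasDerivAt v (acc t) t)
    (hp : ∀ t ≥ t₀, IsProxPt Φ (lam t) (x t) (p t))
    (hG' : ∀ t ≥ t₀, HasDerivAt (fun s => (lam s)⁻¹ • (x s - p s)) (G' t) t)
    (hode : ∀ t ≥ t₀, acc t + (α / t) • v t + β t • G' t
        + b t • ((lam t)⁻¹ • (x t - p t)) = 0)
    (hα : 1 < α)
    (hlammono : MonotoneOn lam (Set.Ici t₀))
    (hβmono : MonotoneOn β (Set.Ici t₀))
    (hw : ∀ t ≥ t₀, β' t + β t / t < b t)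
    (hAs2 : ∃ ε, 0 < ε ∧ ε < α - 1 ∧
      ∀ t ≥ t₀, ε * b t ≤ (α - 3) * (b t - β' t - β t / t) - t * w' t)
    (hAs4 : ∫⁻ t in Set.Ici t₀, ENNReal.ofReal ((lam' t) ^ 2 * t ^ 3 * (β t) ^ 2 / (lam t) ^ 4
      - lam' t * t ^ 2 * b t / (2 * (lam t) ^ 2)) < ⊤)
    (hAs : ∃ C > (0 : ℝ), ∀ t ≥ t₀, 2 * t * b t + t ^ 2 * b' t ≤ C * (t * b t))
    (hargmin : ∃ z, ∀ y, Φ z ≤ Φ y)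
    :
    Filter.Tendsto (fun t => t * Real.sqrt (b t * lam t) * ‖(lam t)⁻¹ • (x t - p t)‖)
      Filter.atTop (nhds 0) := by
  obtain ⟨ε, hε, hεα, hAs2⟩ := hAs2
  obtain ⟨C, hC, hAs⟩ := hAs
  obtain ⟨z, hz⟩ := hargmin
  have hzt : Φ z ≠ ⊤ := by
    obtain ⟨y, hy⟩ := hΦproper
    exact fun h => hy (top_le_iff.1 (h ▸ hz y))
  have hpt : ∀ t ≥ t₀, Φ (p t) ≠ ⊤ := fun t ht => aux_finite hΦproper (hp t ht)
  obtain ⟨G, hG⟩ : ∃ G : ℝ → H, ∀ s, G s = (lam s)⁻¹ • (x s - p s) := ⟨_, fun _ => rfl⟩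
  simp only [← hG] at hG' hode ⊢
  obtain ⟨w, hwdef⟩ : ∃ w : ℝ → ℝ, ∀ s, w s = b s - β' s - β s / s := ⟨_, fun _ => rfl⟩
  simp only [← hwdef] at hw' hAs2
  have hwpos : ∀ t ≥ t₀, 0 < w t := fun t ht => by
    have := hw t ht
    rw [hwdef]; linarith
  have hxp : ∀ t ≥ t₀, x t - p t = lam t • G t := fun t ht => by
    rw [hG, smul_smul, mul_inv_cancel₀ (hlampos t ht).ne', one_smul]
  -- the function values
  obtain ⟨f, hf⟩ : ∃ f : ℝ → ℝ, ∀ s, f s = (Φ (p s)).toReal - (Φ z).toReal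
    + ‖x s - p s‖ ^ 2 / (2 * lam s) := ⟨_, fun _ => rfl⟩
  have hsq : ∀ t ≥ t₀, ‖x t - p t‖ ^ 2 / (2 * lam t) = lam t / 2 * ‖G t‖ ^ 2 := fun t ht => by
    have := hlampos t ht
    rw [hxp t ht, norm_smul, mul_pow, Real.norm_eq_abs, sq_abs]
    field_simp
  have hfge : ∀ t ≥ t₀, lam t / 2 * ‖G t‖ ^ 2 ≤ f t := fun t ht => by
    have h1 : (Φ z).toReal ≤ (Φ (p t)).toReal :=
      EReal.toReal_le_toReal (hz _) (hΦbot z) (hpt t ht)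
    rw [hf, hsq t ht]
    linarith
  have hf0 : ∀ t ≥ t₀, 0 ≤ f t := fun t ht => by
    have := hlampos t ht
    exact le_trans (by positivity) (hfge t ht)
  have hsub : ∀ t ≥ t₀, f t + lam t / 2 * ‖G t‖ ^ 2 ≤ inner ℝ (x t - z) (G t) := fun t ht => by
    have h1 := aux_subgrad hΦbot hΦconv (hlampos t ht) (hp t ht) (hpt t ht) hzt
    rw [← hG] at h1
    rw [hf, hsq t ht]
    have e : x t - z = lam t • G t - (z - p t) := by rw [← hxp t ht]; module
    rw [e, inner_sub_left, inner_smul_left, real_inner_self_eq_norm_sq, real_inner_comm]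
    simp only [conj_trivial]
    linarith
  have hGM : ∀ t ≥ t₀, lam t ^ 2 * ‖G t‖ ^ 2 ≤ ‖x t - z‖ ^ 2 := fun t ht => by
    have h1 := hsub t ht
    have h2 := hfge t ht
    have h3 := real_inner_le_norm (x t - z) (G t)
    have hl := hlampos t ht
    have h4 : lam t * ‖G t‖ ≤ ‖x t - z‖ := by
      rcases (norm_nonneg (G t)).eq_or_lt with h | h
      · rw [← h]; simp
      · refine le_of_mul_le_mul_right ?_ h
        nlinarith
    rw [← mul_pow]
    exact pow_le_pow_left₀ (by positivity) h4 2
  -- derivatives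
  have hl'0 : ∀ t > t₀, 0 ≤ lam' t := fun t ht => aux_deriv_nonneg ht hlammono (hlam' t ht.le)
  have hpd : ∀ t > t₀, HasDerivAt p (v t - lam' t • G t - lam t • G' t) t := fun t ht => by
    have h1 := (hx t ht.le).sub ((hlam' t ht.le).smul (hG' t ht.le))
    refine (h1.congr_of_eventuallyEq ?_).congr_deriv (by module)
    filter_upwards [lt_mem_nhds ht] with s hs
    have := hxp s hs.le
    simp only [Pi.sub_apply, Pi.smul_apply', ← this]
    abel
  have hmono : ∀ t > t₀, 0 ≤ inner ℝ (G' t) (v t - lam' t • G t - lam t • G' t) := fun t ht => by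
    refine aux_mono_deriv (hG' t ht.le) (hpd t ht) ?_
    filter_upwards [lt_mem_nhds ht] with s hs
    have h1 := aux_subgrad hΦbot hΦconv (hlampos t ht.le) (hp t ht.le) (hpt t ht.le) (hpt s hs.le)
    have h2 := aux_subgrad hΦbot hΦconv (hlampos s hs.le) (hp s hs.le) (hpt s hs.le) (hpt t ht.le)
    rw [← hG] at h1 h2
    have e : p t - p s = - (p s - p t) := by abel
    rw [e, inner_neg_right] at h2
    rw [inner_sub_left]
    linarith
  have hvG : ∀ t > t₀, -(lam' t / lam t * ‖G t‖ * ‖v t‖) ≤ inner ℝ (G' t) (v t) := fun t ht =>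
    aux_ball (hlampos t ht.le) (hl'0 t ht) (hmono t ht)
  have hfd : ∀ t > t₀, HasDerivAt f (inner ℝ (G t) (v t) - lam' t / 2 * ‖G t‖ ^ 2) t := fun t ht => by
    have h1 := aux_moreau_deriv (P := fun s => (Φ (p s)).toReal - (Φ z).toReal) ht hlampos
      (hlam' t ht.le) (hx t ht.le) (hG' t ht.le) hG (hpd t ht) (fun s hs r hr => by
        have := aux_prox_real hΦbot (hp s hs) (hpt s hs) (hpt r hr)
        linarith)
    have e : f = fun s => (Φ (p s)).toReal - (Φ z).toReal + ‖x s - p s‖ ^ 2 / (2 * lam s) :=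
      funext hf
    rw [e]; exact h1
  -- energy
  set d := ε / 2 with hd
  have hd0 : 0 < d := by positivity
  obtain ⟨c, hc⟩ : ∃ c, c = α - 1 - d := ⟨_, rfl⟩
  have hc0 : 0 < c := by rw [hc, hd]; linarith
  obtain ⟨E, hE⟩ : ∃ E : ℝ → ℝ, ∀ s, E s = (s ^ 2 * w s + d * (s * β s)) * f s
    + 1 / 2 * ‖c • (x s - z) + s • (v s + β s • G s)‖ ^ 2 + c * d / 2 * ‖x s - z‖ ^ 2 :=
    ⟨_, fun _ => rfl⟩
  have hEge : ∀ t ≥ t₀, c * d / 2 * ‖x t - z‖ ^ 2 ≤ E t := fun t ht => by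
    have h1 := hf0 t ht
    have h2 := hwpos t ht
    have h3 := hβnonneg t ht
    have h4 : 0 < t := ht₀.trans_le ht
    rw [hE]
    have : 0 ≤ (t ^ 2 * w t + d * (t * β t)) * f t := by positivity
    have : 0 ≤ 1 / 2 * ‖c • (x t - z) + t • (v t + β t • G t)‖ ^ 2 := by positivity
    linarith
  have hEd : ∀ t > t₀, ∃ E', HasDerivAt E E' t ∧
      E' ≤ -(d * (t * b t * f t + t * ‖v t‖ ^ 2)) := fun t ht => by
    have ht' := ht.le
    have htp : 0 < t := ht₀.trans ht
    have hacc : acc t = -((α / t) • v t) - β t • G' t - b t • G t := by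
      have := hode t ht'
      rw [← sub_eq_zero, ← this]; abel
    have hβG := (hβ' t ht').smul (hG' t ht')
    have hu : HasDerivAt (fun s => c • (x s - z) + s • (v s + β s • G s))
        ((c + 1 - α) • v t - (t * w t) • G t) t := by
      have h1 := (((hx t ht').sub_const z).const_smul c).add
        ((hasDerivAt_id t).smul ((hv t ht').add hβG))
      refine h1.congr_deriv ?_
      have e : t * w t = t * b t - t * β' t - β t := by rw [hwdef]; field_simp
      rw [e, hacc]
      simp only [Pi.add_apply, Pi.smul_apply', id]
      match_scalars <;> field_simp <;> ring
    have hA := (((hasDerivAt_id t).pow 2).mul (hw' t ht')).add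
      (((hasDerivAt_id t).mul (hβ' t ht')).const_mul d)
    have hEt := ((hA.mul (hfd t ht)).add ((hu.norm_sq).const_mul (1 / 2))).add
      ((((hx t ht').sub_const z).norm_sq).const_mul (c * d / 2))
    refine ⟨_, hEt.congr_of_eventuallyEq (Eventually.of_forall fun s => ?_), ?_⟩
    · rw [hE]; simp
    · simp only [Pi.add_apply, Pi.mul_apply, Pi.pow_apply, id]
      have h1 := hf0 t ht'
      have h2 := hwpos t ht'
      have h3 := hβnonneg t ht'
      have h4 := hlampos t ht'
      have h5 := hl'0 t ht
      have h6 := hsub t ht'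
      have h7 := hAs2 t ht'
      have h8 : t * β' t + β t = t * b t - t * w t := by rw [hwdef]; field_simp; ring
      have k1 : 0 ≤ t * f t * ((α - 3) * w t - t * w' t - 2 * d * b t) :=
        mul_nonneg (by positivity) (by rw [hd]; linarith)
      have k2 : 0 ≤ (t ^ 2 * w t + d * (t * β t)) * (lam' t / 2 * ‖G t‖ ^ 2) := by positivity
      have k3 : 0 ≤ c * t * w t * (inner ℝ (x t - z) (G t) - (f t + lam t / 2 * ‖G t‖ ^ 2)) :=
        mul_nonneg (by positivity) (by linarith)
      have k4 : 0 ≤ c * t * w t * (lam t / 2 * ‖G t‖ ^ 2) := by positivity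
      have k5 : 0 ≤ t ^ 2 * β t * w t * ‖G t‖ ^ 2 := by positivity
      have k6 : d * f t * (t * β' t + β t) = d * f t * (t * b t - t * w t) := by rw [h8]
      simp only [inner_add_left, inner_sub_right, inner_add_right, inner_smul_left,
        inner_smul_right, conj_trivial, real_inner_self_eq_norm_sq] at *
      have s1 := real_inner_comm (v t) (G t)
      rw [s1] at *
      generalize inner ℝ (x t - z) (G t) = q1 at *
      generalize inner ℝ (x t - z) (v t) = q2 at *
      have hα' : α = c + 1 + d := by rw [hc]; ring
      subst hα'
      norm_num
      nlinarith
  choose! E' hE' hE'le using hEd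
  -- second energy
  obtain ⟨F, hF⟩ : ∃ F : ℝ → ℝ, ∀ s, F s = s ^ 2 * b s * f s + s ^ 2 / 2 * ‖v s‖ ^ 2 :=
    ⟨_, fun _ => rfl⟩
  set h : ℝ → ℝ := fun t => (lam' t) ^ 2 * t ^ 3 * (β t) ^ 2 / (lam t) ^ 4
      - lam' t * t ^ 2 * b t / (2 * (lam t) ^ 2) with hh
  have hFd : ∀ t > t₀, ∃ F', HasDerivAt F F' t ∧
      F' ≤ C * (t * b t * f t) + t * ‖v t‖ ^ 2 + lam t ^ 2 * ‖G t‖ ^ 2 * h t := fun t ht => by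
    have ht' := ht.le
    have htp : 0 < t := ht₀.trans ht
    have hacc : acc t = -((α / t) • v t) - β t • G' t - b t • G t := by
      have := hode t ht'
      rw [← sub_eq_zero, ← this]; abel
    have hFt := ((((hasDerivAt_id t).pow 2).mul (hb' t ht')).mul (hfd t ht)).add
      ((((hasDerivAt_id t).pow 2).div_const 2).mul (hv t ht').norm_sq)
    refine ⟨_, hFt.congr_of_eventuallyEq (Eventually.of_forall fun s => ?_), ?_⟩
    · rw [hF]; simp
    · simp only [Pi.add_apply, Pi.mul_apply, Pi.pow_apply, id]
      have h1 := hf0 t ht'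
      have h3 := hβnonneg t ht'
      have h4 := hlampos t ht'
      have h5 := hl'0 t ht
      have k1 := mul_le_mul_of_nonneg_right (hAs t ht') h1
      have k2 := mul_le_mul_of_nonneg_left (hvG t ht) (show 0 ≤ t ^ 2 * β t by positivity)
      have k3 : 0 ≤ t * (‖v t‖ / 2 - t * β t * (lam' t / lam t) * ‖G t‖) ^ 2 := by positivity
      have k4 : lam t ^ 2 * ‖G t‖ ^ 2 * h t = t ^ 3 * β t ^ 2 * (lam' t / lam t) ^ 2 * ‖G t‖ ^ 2
          - t ^ 2 * b t * (lam' t / 2 * ‖G t‖ ^ 2) := by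
        rw [hh]; field_simp
      have k5 : 0 ≤ (α - 1) * (t * ‖v t‖ ^ 2) :=
        mul_nonneg (by linarith) (by positivity)
      have k6 : 0 ≤ t * ‖v t‖ ^ 2 := by positivity
      rw [k4, hacc]
      simp only [inner_sub_right, inner_neg_right, inner_smul_right, real_inner_self_eq_norm_sq]
      rw [real_inner_comm (v t) (G t), real_inner_comm (v t) (G' t)] at *
      have e : t ^ 2 * (α / t * ‖v t‖ ^ 2) = α * (t * ‖v t‖ ^ 2) := by field_simp
      generalize lam' t / lam t = ρ at *
      generalize α / t * ‖v t‖ ^ 2 = σ at *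
      norm_num
      nlinarith
  choose! F' hF' hF'le using hFd
  -- conclude
  obtain ⟨t₁, ht₁⟩ : ∃ t₁, t₁ = t₀ + 1 := ⟨_, rfl⟩
  have ht01 : t₀ < t₁ := by linarith
  have ht1p : 0 < t₁ := by linarith
  have hgt : ∀ t ≥ t₁, t > t₀ := fun t ht => by linarith
  have hEanti : ∀ t ≥ t₁, E t ≤ E t₁ := by
    have : AntitoneOn E (Set.Ici t₁) := by
      apply antitoneOn_of_deriv_nonpos (convex_Ici t₁)
      · exact fun t ht => (hE' t (hgt t ht)).continuousAt.continuousWithinAt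
      · intro t ht
        rw [interior_Ici] at ht
        exact (hE' t (hgt t (le_of_lt ht))).differentiableAt.differentiableWithinAt
      · intro t ht
        rw [interior_Ici] at ht
        have ht' := hgt t (le_of_lt ht)
        rw [(hE' t ht').deriv]
        refine (hE'le t ht').trans ?_
        have h1 := hf0 t ht'.le
        have h2 := hbpos t ht'.le
        have h3 : 0 < t := by linarith
        have : 0 ≤ d * (t * b t * f t + t * ‖v t‖ ^ 2) := by positivity
        linarith
    exact fun t ht => this (le_refl t₁) ht ht
  obtain ⟨M, hM⟩ : ∃ M, M = E t₁ / (c * d / 2) := ⟨_, rfl⟩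
  have hcd : 0 < c * d / 2 := by positivity
  have hM0 : ∀ t ≥ t₁, lam t ^ 2 * ‖G t‖ ^ 2 ≤ M := fun t ht => by
    refine (hGM t (hgt t ht).le).trans ?_
    rw [hM, le_div_iff₀ hcd]
    have h1 := hEge t (hgt t ht).le
    have h2 := hEanti t ht
    linarith
  have hMnn : 0 ≤ M := le_trans (by positivity) (hM0 t₁ le_rfl)
  have hmeas : AEMeasurable h (volume.restrict (Set.Ici t₁)) := by
    have ml : AEMeasurable lam (volume.restrict (Set.Ici t₁)) :=
      ContinuousOn.aemeasurable (fun t ht => (hlam' t (hgt t ht).le).continuousAt.continuousWithinAt)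
        measurableSet_Ici
    have mb : AEMeasurable b (volume.restrict (Set.Ici t₁)) :=
      ContinuousOn.aemeasurable (fun t ht => (hb' t (hgt t ht).le).continuousAt.continuousWithinAt)
        measurableSet_Ici
    have mβ : AEMeasurable β (volume.restrict (Set.Ici t₁)) :=
      ContinuousOn.aemeasurable (fun t ht => (hβ' t (hgt t ht).le).continuousAt.continuousWithinAt)
        measurableSet_Ici
    have ml' : AEMeasurable lam' (volume.restrict (Set.Ici t₁)) := by
      refine (measurable_deriv lam).aemeasurable.congr ?_
      filter_upwards [ae_restrict_mem measurableSet_Ici] with t ht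
      exact (hlam' t (hgt t ht).le).deriv
    have mt : AEMeasurable (fun t : ℝ => t) (volume.restrict (Set.Ici t₁)) := aemeasurable_id
    rw [hh]
    exact ((((ml'.pow_const 2).mul (mt.pow_const 3)).mul (mβ.pow_const 2)).div (ml.pow_const 4)).sub
      (((ml'.mul (mt.pow_const 2)).mul mb).div ((ml.pow_const 2).const_mul 2))
  have hint : IntegrableOn (fun t => M * max (h t) 0) (Set.Ici t₁) := by
    refine Integrable.const_mul ?_ M
    refine (lintegral_ofReal_ne_top_iff_integrable
      (hmeas.max aemeasurable_const).aestronglyMeasurable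
      (ae_of_all _ fun t => le_max_right _ _)).1 ?_
    have e : ∀ t, ENNReal.ofReal (max (h t) 0) = ENNReal.ofReal (h t) := fun t => by
      rw [ENNReal.ofReal_max]; simp
    refine ne_of_eq_of_ne (lintegral_congr e) ?_
    exact ((lintegral_mono_set (Set.Ici_subset_Ici.2 ht01.le)).trans_lt hAs4).ne
  have hFnn : ∀ t ≥ t₁, 0 ≤ F t := fun t ht => by
    have h1 := hf0 t (hgt t ht).le
    have h2 := hbpos t (hgt t ht).le
    rw [hF]; positivity
  have hFlim : Tendsto F atTop (nhds 0) := by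
    refine aux_limit (E := E) (E' := E') (F' := F') (φ := fun t => M * max (h t) 0)
      (K := (C + 1) / d) ht1p hd0 ?_ hFnn (by positivity) (fun t ht => hE' t (hgt t ht))
      (fun t ht => hF' t (hgt t ht)) ?_ (fun t => by positivity) hint ?_
    · intro t ht
      exact le_trans (by positivity) (hEge t (hgt t ht).le)
    · intro t ht
      have htp : 0 < t := by linarith
      refine (hE'le t (hgt t ht)).trans ?_
      have e : F t / t = t * b t * f t + t / 2 * ‖v t‖ ^ 2 := by rw [hF]; field_simp
      rw [e]
      have : 0 ≤ d * (t / 2 * ‖v t‖ ^ 2) := by positivity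
      nlinarith
    · intro t ht
      have htp : 0 < t := by linarith
      have h1 := hF'le t (hgt t ht)
      have h2 := mul_le_mul_of_nonneg_left (hE'le t (hgt t ht)) (show 0 ≤ (C + 1) / d by positivity)
      have e : (C + 1) / d * -(d * (t * b t * f t + t * ‖v t‖ ^ 2))
        = -((C + 1) * (t * b t * f t + t * ‖v t‖ ^ 2)) := by field_simp
      rw [e] at h2
      have h3 : lam t ^ 2 * ‖G t‖ ^ 2 * h t ≤ M * max (h t) 0 :=
        (mul_le_mul_of_nonneg_left (le_max_left _ _) (by positivity)).trans
          (mul_le_mul_of_nonneg_right (hM0 t ht) (le_max_right _ _))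
      have hff := hf0 t (hgt t ht).le
      have hbb := hbpos t (hgt t ht).le
      have h4 : 0 ≤ t * b t * f t := by positivity
      have h5 : 0 ≤ C * (t * ‖v t‖ ^ 2) := by positivity
      linarith
  have hlim2 : Tendsto (fun t => Real.sqrt (2 * F t)) atTop (nhds 0) := by
    have := (hFlim.const_mul 2).sqrt
    simpa using this
  refine squeeze_zero' ?_ ?_ hlim2
  · filter_upwards [eventually_ge_atTop t₁] with t ht
    have htp : 0 < t := by linarith
    positivity
  · filter_upwards [eventually_ge_atTop t₁] with t ht
    have htp : 0 < t := by linarith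
    have hbb := hbpos t (hgt t ht).le
    have hll := hlampos t (hgt t ht).le
    apply Real.le_sqrt_of_sq_le
    rw [mul_pow, mul_pow, Real.sq_sqrt (by positivity), hF]
    have h1 := mul_le_mul_of_nonneg_left (hfge t (hgt t ht).le) (show 0 ≤ t ^ 2 * b t by positivity)
    have h2 : 0 ≤ t ^ 2 / 2 * ‖v t‖ ^ 2 := by positivity
    linarith
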